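/- For every d ∈ ℤ_{≥0}: each of the operators T_k (1 ≤ k ≤ n−1), Y'_i, (Y'_i)^{−1} (1 ≤ i ≤ n) and e'_{ij} (1 ≤ i ≠ j ≤ n) maps the space P^{(d)} of homogeneous polynomials of total degree d into itself, and the only F-linear subspaces V ⊆ P^{(d)} invariant under all of these operators are V = {0} and V = P^{(d)}. -/

import Mathlib

noncomputable section

/-- The Laurent polynomial ring `R[X₁^{±1}, …, Xₙ^{±1}]` in `n` variables over `R`,
realised as the monoid algebra of the additive monoid `Fin n →₀ ℤ` of exponent vectors. -/
abbrev Laur (R : Type*) [CommRing R] (n : ℕ) : Type _ :=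
  AddMonoidAlgebra R (Fin n →₀ ℤ)

variable {R : Type*} [CommRing R] {n : ℕ}

/-- The monomial `c · X^a`. -/
def mono (a : Fin n →₀ ℤ) (c : R) : Laur R n := AddMonoidAlgebra.single a c

/-- The generator `X_i`. -/
def Xel (i : Fin n) : Laur R n := mono (Finsupp.single i 1) 1

/-- The element `X_i⁻¹`. -/
def XinvEl (i : Fin n) : Laur R n := mono (Finsupp.single i (-1)) 1

/-- Multiplication by a Laurent polynomial, as a linear endomorphism. -/
def mulOp (x : Laur R n) : Module.End R (Laur R n) := LinearMap.mulLeft R x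

/-- The operator of multiplication by `X_i`, with `ℕ`-indexing (`0`-based; junk value `1`
out of range). -/
def XOp (i : ℕ) : Module.End R (Laur R n) :=
  if h : i < n then mulOp (Xel ⟨i, h⟩) else 1

/-- The operator of multiplication by `X_i⁻¹`, with `ℕ`-indexing. -/
def XinvOp (i : ℕ) : Module.End R (Laur R n) :=
  if h : i < n then mulOp (XinvEl ⟨i, h⟩) else 1

/-- Ascending product `f s * f (s+1) * ⋯ * f (s+len-1)` (equal to `1` when `len = 0`). -/
def aF {M : Type*} [Monoid M] (f : ℕ → M) (s len : ℕ) : M :=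
  ((List.range' s len).map f).prod

/-- Descending product `f (s+len-1) * ⋯ * f (s+1) * f s` (equal to `1` when `len = 0`). -/
def dF {M : Type*} [Monoid M] (f : ℕ → M) (s len : ℕ) : M :=
  (((List.range' s len).map f).reverse).prod

/-- Integer power `u^z`, where `v` is a designated (two-sided) inverse of `u`. -/
def zpowOp {M : Type*} [Monoid M] (u v : M) (z : ℤ) : M :=
  if 0 ≤ z then u ^ z.toNat else v ^ (-z).toNat

/-- The subspace `P^{(d)} ⊆ L` of homogeneous polynomials of total degree `d`. -/
def degSub (F : Type*) [Field F] (n : ℕ) (d : ℕ) : Submodule F (Laur F n) :=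
  Submodule.span F
    {p | ∃ a : Fin n →₀ ℤ, (∀ i, 0 ≤ a i) ∧ (∑ i, a i) = (d : ℤ) ∧ p = mono a 1}

open AddMonoidAlgebra in
theorem aux_Xel_coeff {F : Type*} [Field F] {n : ℕ} (i : Fin n) (p : Laur F n) (a : Fin n →₀ ℤ) :
    (Xel i * p).coeff a = p.coeff (a - Finsupp.single i 1) := by
  unfold Xel mono
  rw [coeff_single_mul_apply, one_mul]
  congr 1
  abel

open AddMonoidAlgebra in
theorem aux_XinvEl_coeff {F : Type*} [Field F] {n : ℕ} (i : Fin n) (p : Laur F n) (a : Fin n →₀ ℤ) :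
    (XinvEl i * p).coeff a = p.coeff (a + Finsupp.single i 1) := by
  unfold XinvEl mono
  rw [coeff_single_mul_apply, one_mul]
  congr 1
  rw [Finsupp.single_neg]
  abel

theorem aF_succ_left {M : Type*} [Monoid M] (f : ℕ → M) (s l : ℕ) :
    aF f s (l + 1) = f s * aF f (s + 1) l := by
  simp [aF, List.range'_succ]

theorem aF_zero {M : Type*} [Monoid M] (f : ℕ → M) (s : ℕ) : aF f s 0 = 1 := by
  simp [aF]

theorem dF_succ_left {M : Type*} [Monoid M] (f : ℕ → M) (s l : ℕ) :
    dF f s (l + 1) = dF f (s + 1) l * f s := by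
  simp [dF, List.range'_succ]

theorem dF_zero {M : Type*} [Monoid M] (f : ℕ → M) (s : ℕ) : dF f s 0 = 1 := by
  simp [dF]

/-- Action of permutations on exponents. -/
def act {n : ℕ} : Equiv.Perm (Fin n) →* Equiv.Perm (Fin n →₀ ℤ) where
  toFun w :=
    { toFun := Finsupp.equivMapDomain w
      invFun := Finsupp.equivMapDomain w.symm
      left_inv := fun a => by ext i; simp
      right_inv := fun a => by ext i; simp }
  map_one' := by ext a i; simp; rfl
  map_mul' w w' := by ext a i; simp [Equiv.Perm.mul_def]

theorem act_apply {n : ℕ} (w : Equiv.Perm (Fin n)) (a : Fin n →₀ ℤ) (i : Fin n) :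
    act w a i = a (w.symm i) := rfl

theorem act_apply' {n : ℕ} (w : Equiv.Perm (Fin n)) (a : Fin n →₀ ℤ) (i : Fin n) :
    act w a (w i) = a i := by simp [act_apply]

/-- Exact monomial operators. -/
def IsMon {F : Type*} [Field F] {n : ℕ} (B : Module.End F (Laur F n))
    (φ : Equiv.Perm (Fin n →₀ ℤ)) (c : (Fin n →₀ ℤ) → F) : Prop :=
  ∀ p a, (B p).coeff (φ a) = c a * p.coeff a

theorem IsMon.of_mono {F : Type*} [Field F] {n : ℕ} {B : Module.End F (Laur F n)}
    {φ : Equiv.Perm (Fin n →₀ ℤ)} {c : (Fin n →₀ ℤ) → F}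
    (h : ∀ a r, B (mono a r) = mono (φ a) (c a * r)) : IsMon B φ c := by
  intro p a
  induction p using AddMonoidAlgebra.induction_linear with
  | zero => simp
  | add f g hf hg => simp [hf, hg, mul_add]
  | single b r =>
    have := h b r
    unfold mono at this
    rw [this]
    classical
    simp only [AddMonoidAlgebra.coeff_single, Finsupp.single_apply, φ.injective.eq_iff]
    split_ifs with hh
    · rw [hh]
    · simp

theorem IsMon.mul {F : Type*} [Field F] {n : ℕ} {B B' : Module.End F (Laur F n)}
    {φ φ' : Equiv.Perm (Fin n →₀ ℤ)} {c c' : (Fin n →₀ ℤ) → F}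
    (h : IsMon B φ c) (h' : IsMon B' φ' c') :
    IsMon (B * B') (φ * φ') (fun a => c (φ' a) * c' a) := by
  intro p a
  rw [Module.End.mul_apply, Equiv.Perm.mul_apply, h, h', mul_assoc]

/-- adjacent transposition -/
def sw (n k : ℕ) : Equiv.Perm (Fin n) :=
  if h : k + 1 < n then Equiv.swap ⟨k, Nat.lt_of_succ_lt h⟩ ⟨k + 1, h⟩ else 1

theorem sw_val {n k : ℕ} (h : k + 1 < n) (b : Fin n) :
    ((sw n k b : Fin n) : ℕ) = if (b : ℕ) = k then k + 1 else if (b : ℕ) = k + 1 then k else b := by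
  unfold sw
  rw [dif_pos h, Equiv.swap_apply_def]
  simp only [Fin.ext_iff]
  split_ifs <;> simp

theorem aF_sw_val {n : ℕ} (l : ℕ) : ∀ (s : ℕ) (_ : s + l < n) (b : Fin n),
    ((aF (sw n) s l b : Fin n) : ℕ) =
      if (b : ℕ) = s + l then s else if s ≤ (b : ℕ) ∧ (b : ℕ) < s + l then b + 1 else b := by
  induction l with
  | zero => intro s h b; rw [aF_zero]; simp; grind
  | succ l ih =>
    intro s h b
    rw [aF_succ_left, Equiv.Perm.mul_apply, sw_val (by omega), ih (s + 1) (by omega)]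
    grind

theorem dF_sw {n : ℕ} (l : ℕ) : ∀ (s : ℕ) , dF (sw n) s l = (aF (sw n) s l)⁻¹ := by
  induction l with
  | zero => intro s; rw [aF_zero, dF_zero, inv_one]
  | succ l ih =>
    intro s
    rw [aF_succ_left, dF_succ_left, ih, mul_inv_rev]
    congr 1
    unfold sw
    split_ifs <;> simp

theorem rot_symm_val {n : ℕ} [NeZero n] (b : Fin n) :
    (((finRotate n).symm b : Fin n) : ℕ) = if (b : ℕ) = 0 then n - 1 else b - 1 := by
  obtain ⟨m, rfl⟩ := Nat.exists_eq_succ_of_ne_zero (NeZero.ne n)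
  obtain ⟨c, rfl⟩ := (finRotate (m+1)).surjective b
  rw [Equiv.symm_apply_apply]
  by_cases hc : c = Fin.last m
  · subst hc; simp
  · rw [coe_finRotate_of_ne_last hc]; simp

theorem perm_cycle {n : ℕ} [NeZero n] (i : ℕ) (hi : i < n) :
    aF (sw n) i (n - 1 - i) * (finRotate n).symm * aF (sw n) 0 i = 1 := by
  ext b
  have hb := b.2
  rw [Equiv.Perm.mul_apply, Equiv.Perm.mul_apply, aF_sw_val _ _ (by omega), rot_symm_val,
    aF_sw_val _ _ (by omega), Equiv.Perm.one_apply]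
  grind

theorem aF_sw_top {n : ℕ} (i : ℕ) (hi : i < n) (h1 : n - 1 < n) :
    aF (sw n) i (n - 1 - i) ⟨n - 1, h1⟩ = ⟨i, hi⟩ := by
  ext
  rw [aF_sw_val _ _ (by omega)]
  simp
  omega

theorem aF_sw_bot {n : ℕ} [NeZero n] (i : ℕ) (hi : i < n) :
    aF (sw n) 0 i ⟨i, hi⟩ = 0 := by
  ext
  rw [aF_sw_val _ _ (by omega)]
  simp

theorem aux_divide {F : Type*} [Field F] {n : ℕ} (i j : Fin n) (hij : i ≠ j) (r : Laur F n)
    (N : AddSubgroup F) (S : Set (Fin n →₀ ℤ))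
    (hS : ∀ a ∈ S, a + (Finsupp.single i 1 - Finsupp.single j 1) ∈ S)
    (h : ∀ a ∈ S, ((Xel i - Xel j) * r).coeff (a + Finsupp.single i 1) ∈ N) :
    ∀ a ∈ S, r.coeff a ∈ N := by
  set δ : Fin n →₀ ℤ := Finsupp.single i 1 - Finsupp.single j 1 with hδ
  have key : ∀ a ∈ S, r.coeff a - r.coeff (a + δ) ∈ N := by
    intro a ha
    have := h a ha
    rw [sub_mul, AddMonoidAlgebra.coeff_sub, Finsupp.sub_apply, aux_Xel_coeff, aux_Xel_coeff,
      add_sub_cancel_right, add_sub_assoc] at this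
    exact this
  have ind : ∀ (m : ℕ), ∀ a ∈ S, r.coeff (a + m • δ) = 0 → r.coeff a ∈ N := by
    intro m
    induction m with
    | zero => intro a _ h0; simp at h0; rw [h0]; exact N.zero_mem
    | succ m ih =>
      intro a ha h0
      have h1 := ih (a + δ) (hS a ha) (by rw [← h0]; congr 1; rw [succ_nsmul]; abel)
      have := N.add_mem (key a ha) h1
      simpa using this
  intro a ha
  have hinj : Function.Injective (fun m : ℕ => a + m • δ) := by
    intro m m' hm
    have h2 := DFunLike.congr_fun hm i
    simp [hδ, hij] at h2
    exact h2
  obtain ⟨m, hm⟩ := Set.Infinite.exists_notMem_finset (Set.infinite_range_of_injective hinj) r.coeff.support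
  obtain ⟨⟨m, rfl⟩, hm2⟩ := hm
  exact ind m a ha (by simpa using hm2)

/-- Laurent polynomials supported in `S`. -/
def SS (F : Type*) [Field F] {n : ℕ} (S : Set (Fin n →₀ ℤ)) : Submodule F (Laur F n) where
  carrier := {p | ∀ a, a ∉ S → p.coeff a = 0}
  zero_mem' := by intro a _; simp
  add_mem' := by intro p q hp hq a ha; simp [hp a ha, hq a ha]
  smul_mem' := by intro c p hp a ha; simp [hp a ha]

theorem mem_SS {F : Type*} [Field F] {n : ℕ} {S : Set (Fin n →₀ ℤ)} {p : Laur F n} :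
    p ∈ SS F S ↔ ∀ a, a ∉ S → p.coeff a = 0 := Iff.rfl

theorem SS_mono {F : Type*} [Field F] {n : ℕ} {S S' : Set (Fin n →₀ ℤ)} (h : S ⊆ S') :
    SS F S ≤ SS F S' := fun _ hp a ha => hp a (fun h' => ha (h h'))

def AA (n : ℕ) (z : ℤ) : Set (Fin n →₀ ℤ) := {a | (∀ i, 0 ≤ a i) ∧ ∑ i, a i = z}

def AI {n : ℕ} (z : ℤ) (i : Fin n) : Set (Fin n →₀ ℤ) := {a | a ∈ AA n z ∧ 1 ≤ a i}

theorem AI_sub {n : ℕ} (z : ℤ) (i : Fin n) : AI z i ⊆ AA n z := fun _ h => h.1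

theorem degSub_eq {F : Type*} [Field F] (n d : ℕ) : degSub F n d = SS F (AA n d) := by
  apply le_antisymm
  · unfold degSub
    rw [Submodule.span_le]
    rintro p ⟨a, h1, h2, rfl⟩ b hb
    unfold mono
    rw [AddMonoidAlgebra.coeff_single, Finsupp.single_apply, if_neg]
    rintro rfl
    exact hb ⟨h1, h2⟩
  · intro p hp
    have : p = ∑ a ∈ p.coeff.support, p.coeff a • mono a 1 := by
      ext b
      simp only [AddMonoidAlgebra.coeff_sum, AddMonoidAlgebra.coeff_smul, Finsupp.coe_finsetSum,
        Finset.sum_apply, Finsupp.smul_apply, mono, AddMonoidAlgebra.coeff_single,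
        Finsupp.single_apply]
      simp
    rw [this]
    apply Submodule.sum_mem
    intro a ha
    apply Submodule.smul_mem
    apply Submodule.subset_span
    have : a ∈ AA n d := by
      by_contra hc
      rw [Finsupp.mem_support_iff] at ha
      exact ha (hp a hc)
    exact ⟨a, this.1, this.2, rfl⟩

theorem AA_finite (n : ℕ) (z : ℤ) : (AA n z).Finite := by
  have : (Set.Icc (0 : Fin n → ℤ) (fun _ => z)).Finite := Set.finite_Icc _ _
  refine Set.Finite.of_injOn (f := fun a : Fin n →₀ ℤ => (a : Fin n → ℤ)) ?_ ?_ this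
  · intro a ha
    refine ⟨fun i => ha.1 i, fun i => ?_⟩
    have := ha.2
    simp only
    rw [← this]
    exact Finset.single_le_sum (f := fun i => a i) (fun i _ => ha.1 i) (Finset.mem_univ i)
  · intro a _ b _ h
    exact DFunLike.coe_injective h

theorem SS_finite {F : Type*} [Field F] {n : ℕ} {S : Set (Fin n →₀ ℤ)} (h : S.Finite) :
    FiniteDimensional F (SS F S) := by
  have := h.to_subtype
  let f : SS F S →ₗ[F] (S → F) :=
    { toFun := fun p a => p.1.coeff a
      map_add' := by intro p q; ext a; simp
      map_smul' := by intro p q; ext a; simp }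
  apply Module.Finite.of_injective f
  intro p q hpq
  ext a
  by_cases ha : a ∈ S
  · exact congrFun hpq ⟨a, ha⟩
  · rw [p.2 a ha, q.2 a ha]

theorem inv_pres {F M : Type*} [Field F] [AddCommGroup M] [Module F M] (A B : Module.End F M)
    (hBA : B * A = 1) (U : Submodule F M) [FiniteDimensional F U]
    (h : ∀ p ∈ U, A p ∈ U) : ∀ p ∈ U, B p ∈ U := by
  have hinj : Function.Injective (A.restrict h) := by
    intro x y hxy
    have h1 : A x.1 = A y.1 := congrArg Subtype.val hxy
    have h2 := congrArg B h1
    rw [← Module.End.mul_apply, ← Module.End.mul_apply, hBA] at h2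
    exact Subtype.ext h2
  have hsurj := LinearMap.injective_iff_surjective.mp hinj
  intro p hp
  obtain ⟨x, hx⟩ := hsurj ⟨p, hp⟩
  have h1 : A x.1 = p := congrArg Subtype.val hx
  rw [← h1, ← Module.End.mul_apply, hBA]
  exact x.2

theorem IsMon.maps {F : Type*} [Field F] {n : ℕ} {B : Module.End F (Laur F n)}
    {φ : Equiv.Perm (Fin n →₀ ℤ)} {c : (Fin n →₀ ℤ) → F} (h : IsMon B φ c)
    {S S' : Set (Fin n →₀ ℤ)} (hS : ∀ a ∈ S, φ a ∈ S') {p : Laur F n} (hp : p ∈ SS F S) :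
    B p ∈ SS F S' := by
  intro a ha
  obtain ⟨b, rfl⟩ := φ.surjective a
  rw [h, hp b (fun hb => ha (hS b hb)), mul_zero]

theorem act_AA {n : ℕ} (w : Equiv.Perm (Fin n)) (z : ℤ) (a : Fin n →₀ ℤ) (ha : a ∈ AA n z) :
    act w a ∈ AA n z := by
  refine ⟨fun i => ha.1 _, ?_⟩
  rw [← ha.2]
  exact Equiv.sum_comp w.symm (fun i => a i)

theorem act_AI {n : ℕ} (w : Equiv.Perm (Fin n)) (z : ℤ) (i : Fin n) (a : Fin n →₀ ℤ)
    (ha : a ∈ AI z i) : act w a ∈ AI z (w i) := by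
  refine ⟨act_AA w z a ha.1, ?_⟩
  rw [act_apply']
  exact ha.2

theorem divide_supp {F : Type*} [Field F] {n : ℕ} (i j : Fin n) (hij : i ≠ j) (z : ℤ) (c : F)
    (r g : Laur F n) (hg : g ∈ SS F (AA n z)) (h : (Xel i - Xel j) * r = c • (Xel i * g)) :
    r ∈ SS F (AI z i) := by
  have h' : (Xel j - Xel i) * r = - (c • (Xel i * g)) := by rw [← h]; ring
  intro a ha
  have D1 := fun S hS => aux_divide i j hij r ⊥ S hS
  have D2 := fun S hS => aux_divide j i hij.symm r ⊥ S hS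
  simp only [h, h', AddSubgroup.mem_bot] at D1 D2
  by_cases h1 : a i ≤ 0
  · apply D2 {a | a i ≤ 0} _ _ a h1
    · intro b hb
      simp [hij] at hb ⊢
      omega
    · intro b hb
      rw [AddMonoidAlgebra.coeff_neg, Finsupp.neg_apply, AddMonoidAlgebra.coeff_smul,
        Finsupp.smul_apply, aux_Xel_coeff, hg, smul_zero, neg_zero]
      intro hc
      have := hc.1 i
      simp [hij] at this hb
      omega
  by_cases h2 : ∑ l, a l = z
  · have : ∃ l, a l < 0 := by
      by_contra hc
      push Not at hc
      exact ha ⟨⟨hc, h2⟩, by omega⟩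
    obtain ⟨l, hl⟩ := this
    have hli : l ≠ i := by rintro rfl; omega
    apply D1 {a | a l < 0} _ _ a hl
    · intro b hb
      simp [hli] at hb ⊢
      rw [Finsupp.single_apply]
      split_ifs <;> omega
    · intro b hb
      rw [AddMonoidAlgebra.coeff_smul,
        Finsupp.smul_apply, aux_Xel_coeff, hg, smul_zero]
      intro hc
      have := hc.1 l
      simp at this hb
      omega
  · apply D1 {a | ∑ l, a l ≠ z} _ _ a h2
    · intro b hb
      simp only [Set.mem_ofPred_eq, Finsupp.add_apply, Finsupp.sub_apply, Finset.sum_add_distrib,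
        Finset.sum_sub_distrib] at hb ⊢
      have e : ∀ k : Fin n, ∑ x, (Finsupp.single k (1:ℤ)) x = 1 := by
        intro k
        rw [Finset.sum_eq_single k] <;> simp +contextual [Finsupp.single_apply, eq_comm]
      rw [e, e]; simpa using hb
    · intro b hb
      rw [AddMonoidAlgebra.coeff_smul,
        Finsupp.smul_apply, aux_Xel_coeff, hg, smul_zero]
      intro hc
      rw [add_sub_cancel_right] at hc
      exact hb hc.2

section Special

variable {F : Type*} [Field F] {Γ : Type*} [LinearOrderedCommGroupWithZero Γ]

/-- integral Laurent polynomials -/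
def IsInt {n : ℕ} (v : Valuation F Γ) (p : Laur F n) : Prop := ∀ a, v (p.coeff a) ≤ 1

theorem scale_exists {n : ℕ} (v : Valuation F Γ) (p : Laur F n) (hp : p ≠ 0) :
    ∃ c : F, c ≠ 0 ∧ IsInt v (c • p) ∧ ∃ a, v ((c • p).coeff a) = 1 := by
  have hs : p.coeff.support.Nonempty := by
    rw [Finsupp.support_nonempty_iff]
    simpa using hp
  obtain ⟨a, ha, hmax⟩ := Finset.exists_max_image p.coeff.support (fun a => v (p.coeff a)) hs
  have h0 : p.coeff a ≠ 0 := by simpa using ha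
  have hv0 : v (p.coeff a) ≠ 0 := by simpa using h0
  refine ⟨(p.coeff a)⁻¹, inv_ne_zero h0, ?_, a, ?_⟩
  · intro b
    rw [AddMonoidAlgebra.coeff_smul, Finsupp.smul_apply, smul_eq_mul, map_mul, map_inv₀]
    by_cases hb : p.coeff b = 0
    · simp [hb]
    · have := hmax b (by simpa using hb)
      calc (v (p.coeff a))⁻¹ * v (p.coeff b) ≤ (v (p.coeff a))⁻¹ * v (p.coeff a) := by gcongr
        _ = 1 := inv_mul_cancel₀ hv0
  · rw [AddMonoidAlgebra.coeff_smul, Finsupp.smul_apply, smul_eq_mul, inv_mul_cancel₀ h0, map_one]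

theorem v_le_of_sub {v : Valuation F Γ} {x y : F} (h : v (x - y) < 1) (hy : v y ≤ 1) : v x ≤ 1 := by
  have : x = (x - y) + y := by ring
  rw [this]
  exact v.map_add_le h.le hy

theorem v_eq_of_sub {v : Valuation F Γ} {x y : F} (h : v (x - y) < 1) (hy : v y = 1) : v x = 1 := by
  have : x = (x - y) + y := by ring
  rw [this, v.map_add_eq_of_lt_right (by rw [hy]; exact h), hy]

theorem v_mul_lt {v : Valuation F Γ} {x y : F} (hx : v x ≤ 1) (hy : v y < 1) : v (x * y) < 1 := by
  rw [map_mul]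
  calc v x * v y ≤ 1 * v y := by gcongr
    _ < 1 := by simpa using hy

theorem v_mul_le {v : Valuation F Γ} {x y : F} (hx : v x ≤ 1) (hy : v y ≤ 1) : v (x * y) ≤ 1 := by
  rw [map_mul]
  exact mul_le_one' hx hy

/-- `A` specializes to the monomial operator with data `φ`, `c`. -/
def Sp {n : ℕ} (v : Valuation F Γ) (A : Module.End F (Laur F n))
    (φ : Equiv.Perm (Fin n →₀ ℤ)) (c : (Fin n →₀ ℤ) → F) : Prop :=
  (∀ a, v (c a) ≤ 1) ∧ ∀ p, IsInt v p → ∀ a, v ((A p).coeff (φ a) - c a * p.coeff a) < 1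

variable {n : ℕ} {v : Valuation F Γ}

theorem Sp.int {A : Module.End F (Laur F n)}
    {φ : Equiv.Perm (Fin n →₀ ℤ)} {c : (Fin n →₀ ℤ) → F} (h : Sp v A φ c) (p : Laur F n)
    (hp : IsInt v p) : IsInt v (A p) := by
  intro a
  obtain ⟨b, rfl⟩ := φ.surjective a
  exact v_le_of_sub (h.2 p hp b) (v_mul_le (h.1 b) (hp b))

theorem Sp.mul {A A' : Module.End F (Laur F n)}
    {φ φ' : Equiv.Perm (Fin n →₀ ℤ)} {c c' : (Fin n →₀ ℤ) → F} (h : Sp v A φ c)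
    (h' : Sp v A' φ' c') : Sp v (A * A') (φ * φ') (fun a => c (φ' a) * c' a) := by
  refine ⟨fun a => v_mul_le (h.1 _) (h'.1 _), fun p hp a => ?_⟩
  have e : ((A * A') p).coeff ((φ * φ') a) - c (φ' a) * c' a * p.coeff a =
      ((A (A' p)).coeff (φ (φ' a)) - c (φ' a) * (A' p).coeff (φ' a)) +
      c (φ' a) * ((A' p).coeff (φ' a) - c' a * p.coeff a) := by
    rw [Module.End.mul_apply, Equiv.Perm.mul_apply]
    ring
  rw [e]
  exact v.map_add_lt (h.2 _ (h'.int p hp) _) (v_mul_lt (h.1 _) (h'.2 p hp a))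

theorem Sp.congr {A : Module.End F (Laur F n)}
    {φ φ' : Equiv.Perm (Fin n →₀ ℤ)} {c c' : (Fin n →₀ ℤ) → F} (h : Sp v A φ c)
    (hφ : φ = φ') (hc : ∀ a, c a = c' a) : Sp v A φ' c' := by
  have : c = c' := funext hc
  subst this; subst hφ; exact h

theorem Sp.one : Sp v (1 : Module.End F (Laur F n)) 1 (fun _ => 1) :=
  ⟨fun a => by simp, fun p _ a => by simp⟩

theorem Sp.sub {A A' : Module.End F (Laur F n)}
    {φ : Equiv.Perm (Fin n →₀ ℤ)} {c c' : (Fin n →₀ ℤ) → F} (h : Sp v A φ c)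
    (h' : Sp v A' φ c') : Sp v (A - A') φ (fun a => c a - c' a) := by
  refine ⟨fun a => v.map_sub_le (h.1 a) (h'.1 a), fun p hp a => ?_⟩
  have e : ((A - A') p).coeff (φ a) - (c a - c' a) * p.coeff a =
      ((A p).coeff (φ a) - c a * p.coeff a) - ((A' p).coeff (φ a) - c' a * p.coeff a) := by
    rw [LinearMap.sub_apply, AddMonoidAlgebra.coeff_sub, Finsupp.sub_apply]
    ring
  rw [e]
  exact v.map_sub_lt (h.2 p hp a) (h'.2 p hp a)

theorem Sp.smul {A : Module.End F (Laur F n)} (x : F) (hx : v x ≤ 1)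
    {φ : Equiv.Perm (Fin n →₀ ℤ)} {c : (Fin n →₀ ℤ) → F} (h : Sp v A φ c) :
    Sp v (x • A) φ (fun a => x * c a) := by
  refine ⟨fun a => v_mul_le hx (h.1 a), fun p hp a => ?_⟩
  have e : ((x • A) p).coeff (φ a) - (x * c a) * p.coeff a =
      x * ((A p).coeff (φ a) - c a * p.coeff a) := by
    rw [LinearMap.smul_apply, AddMonoidAlgebra.coeff_smul, Finsupp.smul_apply, smul_eq_mul]
    ring
  rw [e]
  exact v_mul_lt hx (h.2 p hp a)

/-- the symbol may be changed modulo the maximal ideal -/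
theorem Sp.change {A : Module.End F (Laur F n)}
    {φ : Equiv.Perm (Fin n →₀ ℤ)} {c c' : (Fin n →₀ ℤ) → F} (h : Sp v A φ c)
    (hc : ∀ a, v (c a - c' a) < 1) : Sp v A φ c' := by
  refine ⟨fun a => v_le_of_sub (y := c a) (by rw [Valuation.map_sub_swap]; exact hc a) (h.1 a),
    fun p hp a => ?_⟩
  have e : (A p).coeff (φ a) - c' a * p.coeff a =
      ((A p).coeff (φ a) - c a * p.coeff a) + p.coeff a * (c a - c' a) := by ring
  rw [e]
  exact v.map_add_lt (h.2 p hp a) (v_mul_lt (hp a) (hc a))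

theorem IsMon.sp {A : Module.End F (Laur F n)}
    {φ : Equiv.Perm (Fin n →₀ ℤ)} {c : (Fin n →₀ ℤ) → F} (h : IsMon A φ c)
    (hc : ∀ a, v (c a) ≤ 1) : Sp v A φ c :=
  ⟨hc, fun p _ a => by rw [h, sub_self, map_zero]; exact zero_lt_one⟩

theorem Sp.inv {A Ai : Module.End F (Laur F n)} (hA : A * Ai = 1) {c : (Fin n →₀ ℤ) → F}
    (hc : ∀ a, v (c a) = 1) (h : Sp v A 1 c) : Sp v Ai 1 (fun a => (c a)⁻¹) := by
  have hA' : ∀ p, A (Ai p) = p := fun p => by rw [← Module.End.mul_apply, hA]; rfl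
  have int : ∀ p, IsInt v p → IsInt v (Ai p) := by
    intro p hp
    by_cases h0 : Ai p = 0
    · rw [h0]; intro a; simp
    obtain ⟨x, hx, hi, a, ha⟩ := scale_exists v (Ai p) h0
    have h1 := h.2 _ hi a
    rw [map_smul, hA'] at h1
    have h2 : v (c a * (x • Ai p).coeff a) = 1 := by rw [map_mul, hc, ha, one_mul]
    have h3 := v_eq_of_sub h1 h2
    rw [AddMonoidAlgebra.coeff_smul, Finsupp.smul_apply, smul_eq_mul, map_mul] at h3
    have h4 : 1 ≤ v x := by
      by_contra hlt
      push Not at hlt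
      have := v_mul_lt (v := v) (hp ((1 : Equiv.Perm (Fin n →₀ ℤ)) a)) hlt
      rw [map_mul, mul_comm, h3] at this
      exact lt_irrefl _ this
    intro b
    have h5 := hi b
    rw [AddMonoidAlgebra.coeff_smul, Finsupp.smul_apply, smul_eq_mul, map_mul] at h5
    calc v ((Ai p).coeff b) = 1 * v ((Ai p).coeff b) := (one_mul _).symm
      _ ≤ v x * v ((Ai p).coeff b) := by gcongr
      _ ≤ 1 := h5
  refine ⟨fun a => by rw [map_inv₀, hc, inv_one], fun p hp a => ?_⟩
  have h1 := h.2 _ (int p hp) a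
  rw [hA'] at h1
  have hca : c a ≠ 0 := by
    intro h0; have := hc a; rw [h0, map_zero] at this; exact zero_ne_one this
  have e : (Ai p).coeff ((1 : Equiv.Perm (Fin n →₀ ℤ)) a) - (c a)⁻¹ * p.coeff a =
    (- (c a)⁻¹) * (p.coeff a - c a * (Ai p).coeff a) := by
    rw [Equiv.Perm.one_apply]; field_simp; ring
  rw [e]
  exact v_mul_lt (by rw [Valuation.map_neg, map_inv₀, hc, inv_one]) h1

end Special

section Irred

variable {F : Type*} [Field F] {Γ : Type*} [LinearOrderedCommGroupWithZero Γ]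
  {n : ℕ} {v : Valuation F Γ}

/-- the monomial `X^a` is the reduction of an element of `V` -/
def Red (v : Valuation F Γ) (V : Submodule F (Laur F n)) (a : Fin n →₀ ℤ) : Prop :=
  ∃ p ∈ V, ∀ b, v (p.coeff b - (if b = a then 1 else 0)) < 1

theorem Red.int {p : Laur F n} {a : Fin n →₀ ℤ}
    (h : ∀ b, v (p.coeff b - (if b = a then 1 else 0)) < 1) : IsInt v p := by
  intro b
  apply v_le_of_sub (h b)
  split_ifs <;> simp

theorem v_q_sub {q : F} (hq0 : v q = 1) (hq : ∀ z : ℤ, z ≠ 0 → v (q ^ z - 1) = 1)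
    (x y : ℤ) (h : x ≠ y) : v (q ^ x - q ^ y) = 1 := by
  have hq' : q ≠ 0 := by rintro rfl; simp at hq0
  have : q ^ x - q ^ y = q ^ y * (q ^ (x - y) - 1) := by
    rw [mul_sub, ← zpow_add₀ hq']; simp
  rw [this, map_mul, map_zpow₀, hq0, hq _ (sub_ne_zero.mpr h)]
  simp

theorem exists_Red {q : F} (hq0 : v q = 1) (hq : ∀ z : ℤ, z ≠ 0 → v (q ^ z - 1) = 1)
    (V : Submodule F (Laur F n)) (Y : Fin n → Module.End F (Laur F n))
    (hY : ∀ i, Sp v (Y i) 1 (fun a => q ^ (a i))) (hYV : ∀ i, ∀ p ∈ V, Y i p ∈ V) (hV : V ≠ ⊥) :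
    ∃ a, Red v V a := by
  classical
  have main : ∀ m : ℕ, ∀ p ∈ V, IsInt v p → (∃ a, v (p.coeff a) = 1) →
      (p.coeff.support.filter (fun a => v (p.coeff a) = 1)).card = m → ∃ a, Red v V a := by
    intro m
    induction m using Nat.strong_induction_on with
    | _ m ih =>
      intro p hp hpint ⟨a, ha⟩ hm
      by_cases huniq : ∀ b, v (p.coeff b) = 1 → b = a
      · have ha0 : p.coeff a ≠ 0 := by intro h; rw [h, map_zero] at ha; exact zero_ne_one ha
        refine ⟨a, (p.coeff a)⁻¹ • p, V.smul_mem _ hp, fun b => ?_⟩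
        rw [AddMonoidAlgebra.coeff_smul, Finsupp.smul_apply, smul_eq_mul]
        split_ifs with hb
        · rw [hb, inv_mul_cancel₀ ha0, sub_self, map_zero]; exact zero_lt_one
        · rw [sub_zero]
          apply v_mul_lt (by rw [map_inv₀, ha, inv_one])
          exact lt_of_le_of_ne (hpint b) (fun h => hb (huniq b h))
      · push Not at huniq
        obtain ⟨b, hb, hba⟩ := huniq
        obtain ⟨i, hi⟩ : ∃ i, b i ≠ a i := by
          by_contra hc
          push Not at hc
          exact hba (Finsupp.ext hc)
        set p' := Y i p - q ^ (a i) • p with hp'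
        have key : ∀ d, v (p'.coeff d - (q ^ (d i) - q ^ (a i)) * p.coeff d) < 1 := by
          intro d
          have := (hY i).2 p hpint d
          have e : p'.coeff d - (q ^ (d i) - q ^ (a i)) * p.coeff d =
            (Y i p).coeff ((1 : Equiv.Perm (Fin n →₀ ℤ)) d) - q ^ (d i) * p.coeff d := by
            rw [hp', AddMonoidAlgebra.coeff_sub, AddMonoidAlgebra.coeff_smul, Finsupp.sub_apply,
              Finsupp.smul_apply, smul_eq_mul, Equiv.Perm.one_apply]; ring
          rw [e]; exact this
        have hqz : ∀ z : ℤ, v (q ^ z) = 1 := fun z => by rw [map_zpow₀, hq0, one_zpow]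
        have hle : ∀ d : Fin n →₀ ℤ, v (q ^ (d i) - q ^ (a i)) ≤ 1 := fun d =>
          v.map_sub_le (hqz _).le (hqz _).le
        have hunit : ∀ d, v (p'.coeff d) = 1 → v (p.coeff d) = 1 ∧ d ≠ a := by
          intro d hd
          constructor
          · by_contra hne
            have h1 := v_mul_lt (hle d) (lt_of_le_of_ne (hpint d) hne)
            have h2 := v.map_add_lt (key d) h1
            rw [sub_add_cancel, hd] at h2
            exact lt_irrefl _ h2
          · rintro rfl
            have h2 := key d
            rw [sub_self, zero_mul, sub_zero, hd] at h2
            exact lt_irrefl _ h2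
        have hb' : v (p'.coeff b) = 1 := by
          apply v_eq_of_sub (key b)
          rw [map_mul, hb, v_q_sub hq0 hq _ _ hi, one_mul]
        refine ih _ ?_ p' (V.sub_mem (hYV i p hp) (V.smul_mem _ hp)) ?_ ⟨b, hb'⟩ rfl
        · rw [← hm]
          apply Finset.card_lt_card
          rw [Finset.ssubset_iff_of_subset]
          · refine ⟨a, ?_, ?_⟩
            · simp only [Finset.mem_filter, Finsupp.mem_support_iff]
              refine ⟨?_, ha⟩
              intro h; rw [h, map_zero] at ha; exact zero_ne_one ha
            · intro hmem
              exact (hunit a (Finset.mem_filter.mp hmem).2).2 rfl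
          · intro d hd
            have h1 := (hunit d (Finset.mem_filter.mp hd).2).1
            simp only [Finset.mem_filter, Finsupp.mem_support_iff]
            refine ⟨?_, h1⟩
            intro h; rw [h, map_zero] at h1; exact zero_ne_one h1
        · intro d
          exact v_le_of_sub (key d) (v_mul_le (hle d) (hpint d))
  obtain ⟨p, hp, hp0⟩ := Submodule.exists_mem_ne_zero_of_ne_bot hV
  obtain ⟨c, hc, hpint, hu⟩ := scale_exists v p hp0
  exact main _ (c • p) (V.smul_mem _ hp) hpint hu rfl

theorem Red.move {V : Submodule F (Laur F n)} {a : Fin n →₀ ℤ} (h : Red v V a)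
    {e : Module.End F (Laur F n)} {φ : Equiv.Perm (Fin n →₀ ℤ)} {c : (Fin n →₀ ℤ) → F}
    (he : Sp v e φ c) (heV : ∀ p ∈ V, e p ∈ V) (hc : v (c a) = 1) : Red v V (φ a) := by
  obtain ⟨p, hp, h⟩ := h
  have hpint := Red.int h
  have hca : c a ≠ 0 := by
    intro h0; rw [h0, map_zero] at hc; exact zero_ne_one hc
  refine ⟨(c a)⁻¹ • e p, V.smul_mem _ (heV p hp), fun b => ?_⟩
  obtain ⟨b, rfl⟩ := φ.surjective b
  simp only [φ.injective.eq_iff]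
  have e1 : ((c a)⁻¹ • e p).coeff (φ b) - (if b = a then 1 else 0) =
      (c a)⁻¹ * (((e p).coeff (φ b) - c b * p.coeff b) +
        c b * (p.coeff b - (if b = a then 1 else 0))) := by
    rw [AddMonoidAlgebra.coeff_smul, Finsupp.smul_apply, smul_eq_mul]
    split_ifs with hb
    · subst hb; field_simp; ring
    · ring
  rw [e1]
  apply v_mul_lt (by rw [map_inv₀, hc, inv_one])
  exact v.map_add_lt (he.2 p hpint b) (v_mul_lt (he.1 b) (h b))

theorem Red.full {V : Submodule F (Laur F n)} (z : ℤ) (hV : V ≤ SS F (AA n z))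
    (h : ∀ a ∈ AA n z, Red v V a) : V = SS F (AA n z) := by
  classical
  have := (AA_finite n z).to_subtype
  have := Fintype.ofFinite (AA n z)
  choose f hfV hf using fun a : AA n z => h a.1 a.2
  have := SS_finite (F := F) (AA_finite n z)
  have hli : LinearIndependent F f := by
    rw [Fintype.linearIndependent_iff]
    intro g hg
    by_contra hc
    push Not at hc
    obtain ⟨i0, hi0⟩ := hc
    obtain ⟨m, -, hm⟩ := Finset.exists_max_image Finset.univ (fun i => v (g i)) ⟨i0, Finset.mem_univ _⟩
    have hgm : v (g m) ≠ 0 := by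
      intro h0
      have := hm i0 (Finset.mem_univ _)
      rw [h0] at this
      exact hi0 (by simpa using this)
    have h1 := congrArg (fun p : Laur F n => p.coeff m.1) hg
    simp only [AddMonoidAlgebra.coeff_sum, AddMonoidAlgebra.coeff_smul, Finsupp.coe_finsetSum,
        Finset.sum_apply, Finsupp.smul_apply, smul_eq_mul, AddMonoidAlgebra.coeff_zero,
        Finsupp.zero_apply] at h1
    have h2 : g m = - ∑ i, g i * ((f i).coeff m.1 - (if m.1 = i.1 then 1 else 0)) := by
      simp only [mul_sub, Finset.sum_sub_distrib, h1]
      simp [Subtype.coe_inj]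
    have h3 : v (∑ i, g i * ((f i).coeff m.1 - (if m.1 = i.1 then 1 else 0))) < v (g m) := by
      apply v.map_sum_lt hgm
      intro i _
      rw [map_mul]
      calc v (g i) * _ ≤ v (g m) * _ := by gcongr; exact hm i (Finset.mem_univ _)
        _ < v (g m) * 1 := by
          have := hf i m.1
          exact mul_lt_mul_of_pos_left this (zero_lt_iff.mpr hgm)
        _ = v (g m) := mul_one _
    rw [← Valuation.map_neg, ← h2] at h3
    exact lt_irrefl _ h3
  apply Submodule.eq_of_le_of_finrank_le hV
  let f' : AA n z → V := fun a => ⟨f a, hfV a⟩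
  have hli' : LinearIndependent F f' := by
    apply LinearIndependent.of_comp V.subtype
    exact hli
  have : FiniteDimensional F V := Submodule.finiteDimensional_of_le hV
  have c1 := hli'.fintype_card_le_finrank
  refine le_trans ?_ c1
  let ff : SS F (AA n z) →ₗ[F] (AA n z → F) :=
    { toFun := fun p a => p.1.coeff a
      map_add' := by intro p q; ext a; simp
      map_smul' := by intro p q; ext a; simp }
  have hinj : Function.Injective ff := by
    intro p q hpq
    ext a
    by_cases ha : a ∈ AA n z
    · exact congrFun hpq ⟨a, ha⟩
    · rw [p.2 a ha, q.2 a ha]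
  have := LinearMap.finrank_le_finrank_of_injective hinj
  simpa using this

theorem irred {q c0 : F} (hq0 : v q = 1) (hq : ∀ z : ℤ, z ≠ 0 → v (q ^ z - 1) = 1)
    (hc0 : v c0 = 1) (z : ℤ)
    (V : Submodule F (Laur F n)) (Y : Fin n → Module.End F (Laur F n))
    (hY : ∀ i, Sp v (Y i) 1 (fun a => q ^ (a i))) (hYV : ∀ i, ∀ p ∈ V, Y i p ∈ V)
    (e : Fin n → Fin n → Module.End F (Laur F n))
    (he : ∀ i j, i ≠ j → Sp v (e i j)
      (Equiv.addRight (Finsupp.single i 1 - Finsupp.single j 1))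
      (fun a => c0 * (q ^ (a j) - (q ^ (a j))⁻¹)))
    (heV : ∀ i j, i ≠ j → ∀ p ∈ V, e i j p ∈ V) (hVz : V ≤ SS F (AA n z)) (hV : V ≠ ⊥) :
    V = SS F (AA n z) := by
  have memAA : ∀ a, Red v V a → a ∈ AA n z := by
    rintro a ⟨p, hp, h⟩
    by_contra hc
    have h1 := h a
    rw [hVz hp a hc, if_pos rfl, zero_sub, Valuation.map_neg, map_one] at h1
    exact lt_irrefl _ h1
  apply Red.full (v := v) z hVz
  intro b hb
  have conn : ∀ m : ℕ, ∀ a, Red v V a → (∑ i, (a i - b i).natAbs) = m → Red v V b := by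
    intro m
    induction m using Nat.strong_induction_on with
    | _ m ih =>
      intro a ha hm
      have haA := memAA a ha
      by_cases hab : a = b
      · rw [← hab]; exact ha
      have hsum : ∑ i, (a i - b i) = 0 := by
        rw [Finset.sum_sub_distrib, haA.2, hb.2, sub_self]
      obtain ⟨k, hk⟩ : ∃ k, a k - b k ≠ 0 := by
        by_contra hc
        push Not at hc
        exact hab (Finsupp.ext fun k => by have := hc k; omega)
      obtain ⟨j, -, hj⟩ := Finset.exists_pos_of_sum_zero_of_exists_nonzero _ hsum ⟨k, Finset.mem_univ _, hk⟩
      obtain ⟨i, -, hi⟩ := Finset.exists_pos_of_sum_zero_of_exists_nonzero (fun i => b i - a i)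
        (by rw [← neg_inj, ← Finset.sum_neg_distrib]; simpa using hsum)
        ⟨k, Finset.mem_univ _, by omega⟩
      have hij : i ≠ j := by rintro rfl; omega
      have hmv := ha.move (he i j hij) (heV i j hij) (by
        rw [map_mul, hc0, one_mul, ← zpow_neg]
        apply v_q_sub hq0 hq
        have := hb.1 j
        omega)
      refine ih _ ?_ _ hmv rfl
      rw [← hm]
      apply Finset.sum_lt_sum
      · intro l _
        simp only [Equiv.coe_addRight, Finsupp.add_apply, Finsupp.sub_apply, Finsupp.single_apply]
        split_ifs with h1 h2 h2
        · exact absurd (h1.trans h2.symm) hij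
        · subst h1; omega
        · subst h2; omega
        · omega
      · refine ⟨i, Finset.mem_univ _, ?_⟩
        simp only [Equiv.coe_addRight, Finsupp.add_apply, Finsupp.sub_apply, Finsupp.single_apply,
          if_neg hij.symm]
        simp
        omega
  obtain ⟨a, ha⟩ := exists_Red hq0 hq V Y hY hYV hV
  exact conn _ a ha rfl

end Irred

section Ops

variable {F : Type*} [Field F] {Γ : Type*} [LinearOrderedCommGroupWithZero Γ]
  {n : ℕ} {v : Valuation F Γ}

theorem T_sp {t : F} (ht : v (t - 1) < 1) (i j : Fin n) (hij : i ≠ j)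
    (A B : Module.End F (Laur F n)) (φ : Equiv.Perm (Fin n →₀ ℤ)) (hB : IsMon B φ (fun _ => 1))
    (h : ∀ p, (Xel i - Xel j) * A p = (t⁻¹ • Xel i - t • Xel j) * B p
      + (t - t⁻¹) • (Xel i * p)) : Sp v A φ (fun _ => 1) := by
  have hBsp : Sp v B φ (fun _ => 1) := hB.sp (fun _ => by simp)
  have ht1 : v t = 1 := v_eq_of_sub ht (map_one v)
  have ht0 : t ≠ 0 := by rintro rfl; simp at ht1
  have hti : v (t⁻¹ - 1) < 1 := by
    have : t⁻¹ - 1 = (-t⁻¹) * (t - 1) := by field_simp; ring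
    rw [this]
    exact v_mul_lt (by rw [Valuation.map_neg, map_inv₀, ht1, inv_one]) ht
  have htt : v (t - t⁻¹) < 1 := by
    have : t - t⁻¹ = (t - 1) - (t⁻¹ - 1) := by ring
    rw [this]
    exact v.map_sub_lt ht hti
  refine ⟨fun _ => by simp, fun p hp a => ?_⟩
  rw [← hB p a, ← Finsupp.sub_apply, ← AddMonoidAlgebra.coeff_sub]
  have hr : (Xel i - Xel j) * (A p - B p) = (t⁻¹ - 1) • (Xel i * B p) - (t - 1) • (Xel j * B p)
      + (t - t⁻¹) • (Xel i * p) := by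
    rw [mul_sub, h]
    simp only [sub_mul, sub_smul, smul_mul_assoc, one_smul]
    abel
  have := aux_divide i j hij (A p - B p) (v.ltAddSubgroup 1) Set.univ (fun _ _ => Set.mem_univ _)
    (fun a _ => by
      rw [hr]
      simp only [AddMonoidAlgebra.coeff_add, AddMonoidAlgebra.coeff_sub,
        AddMonoidAlgebra.coeff_smul, Finsupp.add_apply, Finsupp.sub_apply, Finsupp.smul_apply,
        smul_eq_mul, aux_Xel_coeff]
      show v _ < _
      rw [Units.val_one]
      have hBp := hBsp.int p hp
      refine v.map_add_lt (v.map_sub_lt ?_ ?_) ?_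
      · rw [mul_comm]; exact v_mul_lt (hBp _) hti
      · rw [mul_comm]; exact v_mul_lt (hBp _) ht
      · rw [mul_comm]; exact v_mul_lt (hp _) htt) (φ a) (Set.mem_univ _)
  exact this

theorem Sp_aF {T : ℕ → Module.End F (Laur F n)}
    (h : ∀ k, k + 1 < n → Sp v (T k) (act (sw n k)) (fun _ => 1)) (l : ℕ) :
    ∀ s, s + l < n → Sp v (aF T s l) (act (aF (sw n) s l)) (fun _ => 1) := by
  induction l with
  | zero => intro s _; rw [aF_zero, aF_zero, map_one]; exact Sp.one
  | succ l ih =>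
    intro s hs
    rw [aF_succ_left, aF_succ_left, map_mul]
    exact ((h s (by omega)).mul (ih (s + 1) (by omega))).congr rfl (fun a => by simp)

theorem Sp_dF {T : ℕ → Module.End F (Laur F n)}
    (h : ∀ k, k + 1 < n → Sp v (T k) (act (sw n k)) (fun _ => 1)) (l : ℕ) :
    ∀ s, s + l < n → Sp v (dF T s l) (act (dF (sw n) s l)) (fun _ => 1) := by
  induction l with
  | zero => intro s _; rw [dF_zero, dF_zero, map_one]; exact Sp.one
  | succ l ih =>
    intro s hs
    rw [dF_succ_left, dF_succ_left, map_mul]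
    exact ((ih (s + 1) (by omega)).mul (h s (by omega))).congr rfl (fun a => by simp)

theorem IsMon_aF {T : ℕ → Module.End F (Laur F n)}
    (h : ∀ k, k + 1 < n → IsMon (T k) (act (sw n k)) (fun _ => 1)) (l : ℕ) :
    ∀ s, s + l < n → IsMon (aF T s l) (act (aF (sw n) s l)) (fun _ => 1) := by
  induction l with
  | zero => intro s _; rw [aF_zero, aF_zero, map_one]; intro p a; simp
  | succ l ih =>
    intro s hs
    rw [aF_succ_left, aF_succ_left, map_mul]
    have := (h s (by omega)).mul (ih (s + 1) (by omega))
    simpa using this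

theorem aF_maps {T : ℕ → Module.End F (Laur F n)} {U : Submodule F (Laur F n)}
    (h : ∀ k, k + 1 < n → ∀ p ∈ U, T k p ∈ U) (l : ℕ) :
    ∀ s, s + l < n → ∀ p ∈ U, aF T s l p ∈ U := by
  induction l with
  | zero => intro s _ p hp; rw [aF_zero]; exact hp
  | succ l ih =>
    intro s hs p hp
    rw [aF_succ_left]
    exact h s (by omega) _ (ih (s + 1) (by omega) p hp)

theorem dF_maps {T : ℕ → Module.End F (Laur F n)} {U : Submodule F (Laur F n)}
    (h : ∀ k, k + 1 < n → ∀ p ∈ U, T k p ∈ U) (l : ℕ) :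
    ∀ s, s + l < n → ∀ p ∈ U, dF T s l p ∈ U := by
  induction l with
  | zero => intro s _ p hp; rw [dF_zero]; exact hp
  | succ l ih =>
    intro s hs p hp
    rw [dF_succ_left]
    exact ih (s + 1) (by omega) _ (h s (by omega) p hp)

theorem sum_single_one (k : Fin n) : ∑ x, (Finsupp.single k (1:ℤ)) x = 1 := by
  rw [Finset.sum_eq_single k] <;> simp +contextual [eq_comm]

theorem XinvOp_mon (i : ℕ) (hi : i < n) : IsMon (XinvOp i : Module.End F (Laur F n))
    (Equiv.addRight (-Finsupp.single ⟨i, hi⟩ 1)) (fun _ => 1) := by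
  intro p a
  simp [XinvOp, hi, mulOp, aux_XinvEl_coeff]

theorem XOp_mon (i : ℕ) (hi : i < n) : IsMon (XOp i : Module.End F (Laur F n))
    (Equiv.addRight (Finsupp.single ⟨i, hi⟩ 1)) (fun _ => 1) := by
  intro p a
  simp [XOp, hi, mulOp, aux_Xel_coeff]

theorem main_generic [NeZero n] (t q : F) (ht : v (t - 1) < 1) (hq0 : v q = 1)
    (hq : ∀ z : ℤ, z ≠ 0 → v (q ^ z - 1) = 1)
    (W T Ti : ℕ → Module.End F (Laur F n))
    (hW : ∀ k, k + 1 < n → IsMon (W k) (act (sw n k)) (fun _ => 1))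
    (hT : ∀ (k : ℕ) (hk : k + 1 < n) (p : Laur F n),
      (Xel ⟨k + 1, hk⟩ - Xel ⟨k, Nat.lt_of_succ_lt hk⟩) * T k p
        = (t⁻¹ • Xel ⟨k + 1, hk⟩ - t • Xel ⟨k, Nat.lt_of_succ_lt hk⟩) * W k p
          + (t - t⁻¹) • (Xel ⟨k + 1, hk⟩ * p))
    (hTi : ∀ k, Ti k = T k + (t⁻¹ - t) • (1 : Module.End F (Laur F n)))
    (piInv : Module.End F (Laur F n))
    (hpi : IsMon piInv (act (finRotate n).symm) (fun a => q ^ (a 0)))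
    (Y' Y'i : ℕ → Module.End F (Laur F n))
    (hY' : ∀ i, Y' i = t ^ (n - 1) • (aF T i (n - 1 - i) * piInv * aF Ti 0 i))
    (hY'inv : ∀ i, i < n → Y' i * Y'i i = 1 ∧ Y'i i * Y' i = 1)
    (D' : ℕ → Module.End F (Laur F n))
    (hD' : ∀ i, D' i = aF T i (n - 1 - i)
        * ((q - q⁻¹)⁻¹ • (XinvOp (n - 1) * (Y' (n - 1) - Y'i (n - 1))))
        * dF T i (n - 1 - i))
    (e' : ℕ → ℕ → Module.End F (Laur F n))
    (he' : ∀ i j, e' i j = XOp i * D' j) (d : ℕ) :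
      ((∀ k : ℕ, k + 1 < n → ∀ p ∈ degSub F n d, T k p ∈ degSub F n d) ∧
       (∀ i : ℕ, i < n → ∀ p ∈ degSub F n d, Y' i p ∈ degSub F n d ∧ Y'i i p ∈ degSub F n d) ∧
       (∀ i j : ℕ, i < n → j < n → i ≠ j → ∀ p ∈ degSub F n d, e' i j p ∈ degSub F n d)) ∧
      (∀ V : Submodule F (Laur F n), V ≤ degSub F n d →
        (∀ k : ℕ, k + 1 < n → ∀ p ∈ V, T k p ∈ V) →
        (∀ i : ℕ, i < n → ∀ p ∈ V, Y' i p ∈ V ∧ Y'i i p ∈ V) →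
        (∀ i j : ℕ, i < n → j < n → i ≠ j → ∀ p ∈ V, e' i j p ∈ V) →
        V = ⊥ ∨ V = degSub F n d) := by
  have hn : 0 < n := Nat.pos_of_ne_zero (NeZero.ne n)
  have ht1 : v t = 1 := v_eq_of_sub ht (map_one v)
  have ht0 : t ≠ 0 := by rintro rfl; simp at ht1
  have hqne : q ≠ 0 := by rintro rfl; simp at hq0
  have hqz : ∀ z : ℤ, v (q ^ z) = 1 := fun z => by rw [map_zpow₀, hq0, one_zpow]
  have hn1 : n - 1 < n := by omega
  -- support statements
  have Wmap : ∀ k, k + 1 < n → ∀ z p, p ∈ SS F (AA n z) → W k p ∈ SS F (AA n z) :=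
    fun k hk z p hp => (hW k hk).maps (fun a ha => act_AA _ z a ha) hp
  have Tsupp : ∀ k (hk : k + 1 < n), ∀ z, ∀ p ∈ SS F (AA n z),
      T k p - t • W k p ∈ SS F (AI z ⟨k + 1, hk⟩) := by
    intro k hk z p hp
    refine divide_supp ⟨k + 1, hk⟩ ⟨k, Nat.lt_of_succ_lt hk⟩ (by simp) z (t - t⁻¹) _
      (p - W k p) (Submodule.sub_mem _ hp (Wmap k hk z p hp)) ?_
    rw [mul_sub, hT]
    simp only [sub_mul, mul_sub, sub_smul, smul_sub, smul_mul_assoc, mul_smul_comm]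
    abel
  have Tisupp : ∀ k (hk : k + 1 < n), ∀ z, ∀ p ∈ SS F (AA n z),
      Ti k p - t⁻¹ • W k p ∈ SS F (AI z ⟨k, Nat.lt_of_succ_lt hk⟩) := by
    intro k hk z p hp
    refine divide_supp ⟨k, Nat.lt_of_succ_lt hk⟩ ⟨k + 1, hk⟩ (by simp) z (t⁻¹ - t) _
      (p - W k p) (Submodule.sub_mem _ hp (Wmap k hk z p hp)) ?_
    rw [hTi]
    have e : (Xel ⟨k, Nat.lt_of_succ_lt hk⟩ - Xel ⟨k + 1, hk⟩) *
      ((T k + (t⁻¹ - t) • (1 : Module.End F (Laur F n))) p - t⁻¹ • W k p) =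
      - ((Xel ⟨k + 1, hk⟩ - Xel ⟨k, Nat.lt_of_succ_lt hk⟩) * T k p) +
        (Xel ⟨k, Nat.lt_of_succ_lt hk⟩ - Xel ⟨k + 1, hk⟩) * ((t⁻¹ - t) • p - t⁻¹ • W k p) := by
      rw [LinearMap.add_apply, LinearMap.smul_apply, Module.End.one_apply]
      ring
    rw [e, hT]
    simp only [sub_mul, mul_sub, sub_smul, smul_sub, smul_mul_assoc, mul_smul_comm]
    abel
  have Tmap : ∀ z, ∀ k, k + 1 < n → ∀ p ∈ SS F (AA n z), T k p ∈ SS F (AA n z) := by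
    intro z k hk p hp
    have h1 := Submodule.add_mem _ (SS_mono (AI_sub _ _) (Tsupp k hk z p hp))
      (Submodule.smul_mem _ t (Wmap k hk z p hp))
    simpa using h1
  have Timap : ∀ z, ∀ k, k + 1 < n → ∀ p ∈ SS F (AA n z), Ti k p ∈ SS F (AA n z) := by
    intro z k hk p hp
    have h1 := Submodule.add_mem _ (SS_mono (AI_sub _ _) (Tisupp k hk z p hp))
      (Submodule.smul_mem _ t⁻¹ (Wmap k hk z p hp))
    simpa using h1
  have Ymap : ∀ z, ∀ i, i < n → ∀ p ∈ SS F (AA n z), Y' i p ∈ SS F (AA n z) := by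
    intro z i hi p hp
    rw [hY', LinearMap.smul_apply]
    apply Submodule.smul_mem
    rw [Module.End.mul_apply, Module.End.mul_apply]
    apply aF_maps (Tmap z) _ _ (by omega)
    apply hpi.maps (fun a ha => act_AA _ z a ha)
    exact aF_maps (Timap z) _ _ (by omega) p hp
  have Yimap : ∀ z, ∀ i, i < n → ∀ p ∈ SS F (AA n z), Y'i i p ∈ SS F (AA n z) := by
    intro z i hi
    have := SS_finite (F := F) (AA_finite n z)
    exact inv_pres (Y' i) (Y'i i) (hY'inv i hi).2 _ (Ymap z i hi)
  -- the crucial congruence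
  have aFsupp : ∀ z l s (hs : s + l < n), ∀ p ∈ SS F (AA n z),
      aF Ti s l p - (t⁻¹) ^ l • aF W s l p ∈ SS F (AI z ⟨s, by omega⟩) := by
    intro z l
    induction l with
    | zero => intro s hs p hp; rw [aF_zero, aF_zero]; simp
    | succ l ih =>
      intro s hs p hp
      have h1 := ih (s + 1) (by omega) p hp
      have h2 := aF_maps (Timap z) l (s + 1) (by omega) p hp
      have h3 := Tisupp s (by omega) z _ h2
      have h4 := (hW s (by omega)).maps (fun a ha => act_AI _ z _ a ha) h1
      have hsw : sw n s ⟨s + 1, by omega⟩ = ⟨s, by omega⟩ := by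
        ext; rw [sw_val (by omega)]; simp
      rw [hsw] at h4
      have h5 := Submodule.add_mem _ h3 (Submodule.smul_mem _ t⁻¹ h4)
      rw [aF_succ_left, aF_succ_left, Module.End.mul_apply, Module.End.mul_apply]
      convert h5 using 1
      rw [map_sub, map_smul, smul_sub, smul_smul, pow_succ']
      abel
  have Gmon : IsMon (piInv * aF W 0 (n - 1)) 1 (fun a => q ^ (a ⟨n - 1, hn1⟩)) := by
    have h1 := hpi.mul (IsMon_aF hW (n - 1) 0 (by omega))
    have h2 := perm_cycle (n := n) (n - 1) hn1
    rw [Nat.sub_self, aF_zero, one_mul] at h2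
    rw [← map_mul, h2, map_one] at h1
    intro p a
    have e0 : act (aF (sw n) 0 (n - 1)) a 0 = a ⟨n - 1, hn1⟩ := by
      have := aF_sw_bot (n := n) (n - 1) hn1
      rw [← this, act_apply']
    rw [h1 p a]
    simp only [e0, mul_one]
  have Ycong : ∀ z, ∀ p ∈ SS F (AA n z), Y' (n - 1) p - p ∈ SS F (AI z ⟨n - 1, hn1⟩) := by
    intro z p hp
    have h1 := aFsupp z (n - 1) 0 (by omega) p hp
    have h2 := hpi.maps (fun a ha => act_AI _ z _ a ha) h1
    have hr : (finRotate n).symm ⟨0, by omega⟩ = ⟨n - 1, hn1⟩ := by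
      ext; rw [rot_symm_val]; simp
    rw [hr] at h2
    have h3 : (piInv * aF W 0 (n - 1)) p - p ∈ SS F (AI z ⟨n - 1, hn1⟩) := by
      intro a ha
      rw [AddMonoidAlgebra.coeff_sub, Finsupp.sub_apply]
      have := Gmon p a
      rw [Equiv.Perm.one_apply] at this
      rw [this]
      by_cases haA : a ∈ AA n z
      · have h0 : a ⟨n - 1, hn1⟩ = 0 := by
          have := haA.1 ⟨n - 1, hn1⟩
          by_contra hc
          exact ha ⟨haA, by omega⟩
        simp [h0]
      · simp [hp a haA]
    have h4 := Submodule.add_mem _ (Submodule.smul_mem _ (t ^ (n - 1)) h2) h3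
    convert h4 using 1
    rw [hY', Nat.sub_self, aF_zero, one_mul, LinearMap.smul_apply, Module.End.mul_apply,
      Module.End.mul_apply, map_sub, map_smul, smul_sub, smul_smul, ← mul_pow,
      mul_inv_cancel₀ ht0, one_pow, one_smul]
    abel
  have Yicong : ∀ z, ∀ p ∈ SS F (AA n z), Y'i (n - 1) p - p ∈ SS F (AI z ⟨n - 1, hn1⟩) := by
    intro z p hp
    have : FiniteDimensional F (SS F (AI z (⟨n - 1, hn1⟩ : Fin n))) :=
      SS_finite ((AA_finite n z).subset (AI_sub _ _))
    have h1 := inv_pres (Y' (n - 1)) (Y'i (n - 1)) (hY'inv _ hn1).2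
      (SS F (AI z ⟨n - 1, hn1⟩)) (fun p hp => by
        have h := Submodule.add_mem _ (Ycong z p (SS_mono (AI_sub _ _) hp)) hp
        simpa using h) _ (Ycong z p hp)
    have h2 := Submodule.neg_mem _ h1
    convert h2 using 1
    rw [map_sub, ← Module.End.mul_apply, (hY'inv _ hn1).2, Module.End.one_apply]
    abel
  have Dmap : ∀ z, ∀ j, j < n → ∀ p ∈ SS F (AA n z), D' j p ∈ SS F (AA n (z - 1)) := by
    intro z j hj p hp
    rw [hD', Module.End.mul_apply, Module.End.mul_apply]
    apply aF_maps (Tmap (z - 1)) _ _ (by omega)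
    rw [LinearMap.smul_apply]
    apply Submodule.smul_mem
    rw [Module.End.mul_apply]
    have h1 := dF_maps (Tmap z) (n - 1 - j) j (by omega) p hp
    have h2 := Submodule.sub_mem _ (Ycong z _ h1) (Yicong z _ h1)
    rw [sub_sub_sub_cancel_right] at h2
    rw [LinearMap.sub_apply]
    apply (XinvOp_mon (n - 1) hn1).maps _ h2
    intro a ha
    refine ⟨fun i => ?_, ?_⟩
    · have h3 := ha.1.1 i
      have h4 := ha.2
      simp only [Equiv.coe_addRight, Finsupp.add_apply, Finsupp.neg_apply, Finsupp.single_apply]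
      split_ifs with hi
      · rw [← hi]; omega
      · omega
    · simp only [Equiv.coe_addRight, Finsupp.add_apply, Finsupp.neg_apply, Finset.sum_add_distrib,
        Finset.sum_neg_distrib, sum_single_one, ha.1.2]
      ring
  have emap : ∀ z, ∀ i j, i < n → j < n → ∀ p ∈ SS F (AA n z), e' i j p ∈ SS F (AA n z) := by
    intro z i j hi hj p hp
    rw [he', Module.End.mul_apply]
    apply (XOp_mon i hi).maps _ (Dmap z j hj p hp)
    intro a ha
    refine ⟨fun l => ?_, ?_⟩
    · have h3 := ha.1 l
      simp only [Equiv.coe_addRight, Finsupp.add_apply, Finsupp.single_apply]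
      split_ifs <;> omega
    · simp only [Equiv.coe_addRight, Finsupp.add_apply, Finset.sum_add_distrib,
        sum_single_one, ha.2]
      ring
  rw [degSub_eq]
  refine ⟨⟨Tmap d, fun i hi p hp => ⟨Ymap d i hi p hp, Yimap d i hi p hp⟩,
    fun i j hi hj _ => emap d i j hi hj⟩, ?_⟩
  -- irreducibility
  intro V hV _ hYV heV
  by_cases hbot : V = ⊥
  · exact Or.inl hbot
  right
  have Tsp : ∀ k, k + 1 < n → Sp v (T k) (act (sw n k)) (fun _ => 1) := fun k hk =>
    T_sp ht _ _ (by simp) (T k) (W k) _ (hW k hk) (hT k hk)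
  have hti : v t⁻¹ = 1 := by rw [map_inv₀, ht1, inv_one]
  have Tisp : ∀ k, k + 1 < n → Sp v (Ti k) (act (sw n k)) (fun _ => 1) := by
    intro k hk
    refine ⟨fun _ => by simp, fun p hp a => ?_⟩
    have e : (Ti k p).coeff (act (sw n k) a) - 1 * p.coeff a =
      ((T k p).coeff (act (sw n k) a) - 1 * p.coeff a) +
        (p.coeff (act (sw n k) a) * -(t⁻¹ + 1)) * (t - 1) := by
      rw [hTi, LinearMap.add_apply, LinearMap.smul_apply, Module.End.one_apply,
        AddMonoidAlgebra.coeff_add, AddMonoidAlgebra.coeff_smul, Finsupp.add_apply,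
        Finsupp.smul_apply, smul_eq_mul]
      field_simp
      ring
    rw [e]
    refine v.map_add_lt ((Tsp k hk).2 p hp a) (v_mul_lt (v_mul_le (hp _) ?_) ht)
    rw [Valuation.map_neg]
    exact v.map_add_le hti.le (map_one v).le
  have Ysp : ∀ i : Fin n, Sp v (Y' i) 1 (fun a => q ^ (a i)) := by
    intro i
    have hi := i.2
    have h1 := ((Sp_aF Tsp (n - 1 - i) i (by omega)).mul (hpi.sp (v := v) (fun a => (hqz _).le))).mul
      (Sp_aF Tisp i 0 (by omega))
    rw [← map_mul, ← map_mul, perm_cycle _ hi, map_one] at h1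
    have h2 := h1.smul (t ^ (n - 1)) (by rw [map_pow, ht1, one_pow])
    rw [← hY'] at h2
    apply h2.change
    intro a
    have e0 : act (aF (sw n) 0 ↑i) a 0 = a i := by
      have := aF_sw_bot (n := n) (i : ℕ) hi
      rw [← this, act_apply']
    rw [e0]
    have : t ^ (n - 1) * (1 * q ^ (a i) * 1) - q ^ (a i) =
      (q ^ (a i) * ∑ l ∈ Finset.range (n - 1), t ^ l) * (t - 1) := by
      rw [mul_assoc (q ^ (a i)), geom_sum_mul]; ring
    rw [this]
    apply v_mul_lt (v_mul_le (hqz _).le _) ht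
    apply v.map_sum_le
    intro l _
    rw [map_pow, ht1, one_pow]
  have hc0 : v (q - q⁻¹)⁻¹ = 1 := by
    rw [map_inv₀]
    have := v_q_sub hq0 hq 1 (-1) (by norm_num)
    rw [zpow_one, zpow_neg_one] at this
    rw [this, inv_one]
  apply irred hq0 hq hc0 d V (fun i => Y' i) Ysp (fun i p hp => (hYV i i.2 p hp).1)
    (fun i j => e' i j) _ (fun i j hij => heV i j i.2 j.2 (by simpa [Fin.ext_iff] using hij)) hV hbot
  intro i j hij
  have hj := j.2
  have hsub := (Ysp ⟨n - 1, hn1⟩).sub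
    ((Ysp ⟨n - 1, hn1⟩).inv (hY'inv _ hn1).1 (fun a => hqz _))
  have h1 := (((XinvOp_mon (F := F) (n - 1) hn1).sp (v := v) (fun a => by simp)).mul hsub).smul
    (q - q⁻¹)⁻¹ hc0.le
  have h2 := ((Sp_aF Tsp (n - 1 - j) j (by omega)).mul h1).mul (Sp_dF Tsp (n - 1 - j) j (by omega))
  rw [← hD'] at h2
  have h3 := ((XOp_mon (F := F) i i.2).sp (v := v) (fun a => by simp)).mul h2
  rw [← he'] at h3
  have htop := aF_sw_top (n := n) (j : ℕ) hj hn1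
  refine h3.congr ?_ ?_
  · ext a l
    rw [dF_sw]
    simp only [Equiv.Perm.mul_apply, Equiv.coe_addRight, Finsupp.add_apply, Equiv.Perm.one_apply,
      act_apply, Finsupp.sub_apply, Finsupp.neg_apply]
    have e1 : (Finsupp.single (⟨n - 1, hn1⟩ : Fin n) (1 : ℤ)) ((aF (sw n) (↑j) (n - 1 - ↑j)).symm l)
        = (Finsupp.single j (1 : ℤ)) l := by
      rw [Finsupp.single_apply, Finsupp.single_apply]
      congr 1
      rw [Equiv.eq_symm_apply, htop]
    rw [e1]
    have e2 : (Equiv.symm (aF (sw n) (↑j) (n - 1 - ↑j))⁻¹)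
        ((Equiv.symm (aF (sw n) (↑j) (n - 1 - ↑j))) l) = l := by
      rw [← Equiv.Perm.inv_def, ← Equiv.Perm.inv_def, inv_inv, Equiv.Perm.inv_def, Equiv.apply_symm_apply]
    rw [e2]
    ring
  · intro a
    have e1 : act (dF (sw n) (↑j) (n - 1 - ↑j)) a ⟨n - 1, hn1⟩ = a j := by
      rw [dF_sw, act_apply, ← Equiv.Perm.inv_def, inv_inv, htop]
    simp only [e1, one_mul, mul_one]

end Ops

section RatF

open Polynomial in
theorem exists_val : ∃ (Γ : Type) (_ : LinearOrderedCommGroupWithZero Γ)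
    (v : Valuation (RatFunc ℂ) Γ), v (RatFunc.X - 1) < 1 ∧
      ∀ c : ℂ, c ≠ 0 → v (algebraMap ℂ (RatFunc ℂ) c) = 1 := by
  have hprime : Prime (X - C 1 : ℂ[X]) := prime_X_sub_C 1
  let w : IsDedekindDomain.HeightOneSpectrum ℂ[X] :=
    { asIdeal := Ideal.span {X - C 1}
      isPrime := (Ideal.span_singleton_prime hprime.ne_zero).mpr hprime
      ne_bot := by rw [Ne, Ideal.span_singleton_eq_bot]; exact hprime.ne_zero }
  refine ⟨_, _, w.valuation (RatFunc ℂ), ?_, ?_⟩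
  · have e : (RatFunc.X - 1 : RatFunc ℂ) = algebraMap ℂ[X] (RatFunc ℂ) (X - C 1) := by
      simp [RatFunc.algebraMap_X]
    rw [e, w.valuation_lt_one_iff_mem]
    exact Ideal.mem_span_singleton_self _
  · have hle : ∀ c : ℂ, w.valuation (RatFunc ℂ) (algebraMap ℂ (RatFunc ℂ) c) ≤ 1 := by
      intro c
      rw [IsScalarTower.algebraMap_apply ℂ ℂ[X] (RatFunc ℂ)]
      exact w.valuation_le_one _
    intro c hc
    refine le_antisymm (hle c) ?_
    have h := hle c⁻¹
    rw [map_inv₀, map_inv₀] at h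
    have h0 : w.valuation (RatFunc ℂ) (algebraMap ℂ (RatFunc ℂ) c) ≠ 0 := by
      simpa using hc
    exact (inv_le_one₀ (zero_lt_iff.mpr h0)).mp h

end RatF

/-- Over `F = ℂ(τ)` (realised as `RatFunc ℂ`), for every `d ≥ 0` the
operators `T_k`, `Y'_i`, `(Y'_i)⁻¹` and `e'_{ij}` (`i ≠ j`) map the space `P^{(d)}` of
homogeneous polynomials of degree `d` into itself, and the only invariant `F`-subspaces
`V ⊆ P^{(d)}` are `{0}` and `P^{(d)}`. -/
theorem statement15
    (n : ℕ) [NeZero n]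
    (q₀ : ℂ) (hq₀ : q₀ ≠ 0) (hq₀root : ∀ m : ℕ, m ≠ 0 → q₀ ^ m ≠ 1)
    -- the action of the symmetric group permuting the variables
    (W : Equiv.Perm (Fin n) → Module.End (RatFunc ℂ) (Laur (RatFunc ℂ) n))
    (hW : ∀ (w : Equiv.Perm (Fin n)) (v : Fin n →₀ ℤ) (r : (RatFunc ℂ)),
      W w (mono v r) = mono (Finsupp.equivMapDomain w v) r)
    -- the Demazure–Lusztig operators `T_k` and their inverses `Ti k = T k + τ⁻¹ - τ`
    (T Ti : ℕ → Module.End (RatFunc ℂ) (Laur (RatFunc ℂ) n))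
    (hT : ∀ (k : ℕ) (hk : k + 1 < n) (p : Laur (RatFunc ℂ) n),
      (Xel ⟨k + 1, hk⟩ - Xel ⟨k, Nat.lt_of_succ_lt hk⟩) * T k p
        = ((RatFunc.X : RatFunc ℂ)⁻¹ • Xel ⟨k + 1, hk⟩ - (RatFunc.X : RatFunc ℂ) • Xel ⟨k, Nat.lt_of_succ_lt hk⟩)
            * W (Equiv.swap ⟨k, Nat.lt_of_succ_lt hk⟩ ⟨k + 1, hk⟩) p
          + ((RatFunc.X : RatFunc ℂ) - (RatFunc.X : RatFunc ℂ)⁻¹) • (Xel ⟨k + 1, hk⟩ * p))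
    (hTi : ∀ k, Ti k = T k + ((RatFunc.X : RatFunc ℂ)⁻¹ - (RatFunc.X : RatFunc ℂ)) • (1 : Module.End (RatFunc ℂ) (Laur (RatFunc ℂ) n)))
    (hTinv : ∀ k, k + 1 < n → T k * Ti k = 1 ∧ Ti k * T k = 1)
    -- the operator `π⁻¹`
    (piInv : Module.End (RatFunc ℂ) (Laur (RatFunc ℂ) n))
    (hpiInv : ∀ (v : Fin n →₀ ℤ) (r : (RatFunc ℂ)),
      piInv (mono v r)
        = (algebraMap ℂ (RatFunc ℂ) q₀) ^ (v 0) • mono (Finsupp.equivMapDomain (finRotate n).symm v) r)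
    -- the operators `Y_i = T_i ⋯ T_{n-1} ⬝ π⁻¹ ⬝ T_1⁻¹ ⋯ T_{i-1}⁻¹` and their inverses
    (Y Yi : ℕ → Module.End (RatFunc ℂ) (Laur (RatFunc ℂ) n))
    (hY : ∀ i, Y i = aF T i (n - 1 - i) * piInv * aF Ti 0 i)
    (hYinv : ∀ i, i < n → Y i * Yi i = 1 ∧ Yi i * Y i = 1)
    -- the renormalised operators `Y'_i = τ^{n-1} Y_i`, their inverses, and `D'_i`
    (Y' Y'i : ℕ → Module.End (RatFunc ℂ) (Laur (RatFunc ℂ) n))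
    (hY' : ∀ i, Y' i = (RatFunc.X : RatFunc ℂ) ^ (n - 1) • Y i)
    (hY'inv : ∀ i, i < n → Y' i * Y'i i = 1 ∧ Y'i i * Y' i = 1)
    (D' : ℕ → Module.End (RatFunc ℂ) (Laur (RatFunc ℂ) n))
    (hD' : ∀ i, D' i = aF T i (n - 1 - i)
        * ((((algebraMap ℂ (RatFunc ℂ) q₀)) - ((algebraMap ℂ (RatFunc ℂ) q₀))⁻¹)⁻¹ •
            (XinvOp (n - 1) * (Y' (n - 1) - Y'i (n - 1))))
        * dF T i (n - 1 - i))
    -- the operators `e'_{ij} = X_i · D'_j`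
    (e' : ℕ → ℕ → Module.End (RatFunc ℂ) (Laur (RatFunc ℂ) n))
    (he' : ∀ i j, e' i j = XOp i * D' j)
    :
    ∀ d : ℕ,
      ((∀ k : ℕ, k + 1 < n →
          ∀ p ∈ degSub (RatFunc ℂ) n d, T k p ∈ degSub (RatFunc ℂ) n d) ∧
       (∀ i : ℕ, i < n → ∀ p ∈ degSub (RatFunc ℂ) n d,
          Y' i p ∈ degSub (RatFunc ℂ) n d ∧ Y'i i p ∈ degSub (RatFunc ℂ) n d) ∧
       (∀ i j : ℕ, i < n → j < n → i ≠ j →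
          ∀ p ∈ degSub (RatFunc ℂ) n d, e' i j p ∈ degSub (RatFunc ℂ) n d)) ∧
      (∀ V : Submodule (RatFunc ℂ) (Laur (RatFunc ℂ) n), V ≤ degSub (RatFunc ℂ) n d →
        (∀ k : ℕ, k + 1 < n → ∀ p ∈ V, T k p ∈ V) →
        (∀ i : ℕ, i < n → ∀ p ∈ V, Y' i p ∈ V ∧ Y'i i p ∈ V) →
        (∀ i j : ℕ, i < n → j < n → i ≠ j → ∀ p ∈ V, e' i j p ∈ V) →
        V = ⊥ ∨ V = degSub (RatFunc ℂ) n d) := by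
  intro d
  obtain ⟨Γ, _, v, hv1, hv2⟩ := exists_val
  have hqz : ∀ z : ℤ, z ≠ 0 → q₀ ^ z ≠ 1 := by
    intro z hz h
    apply hq₀root z.natAbs (by simpa using hz)
    rcases Int.natAbs_eq z with h1 | h1
    · rw [h1, zpow_natCast] at h; exact h
    · rw [h1, zpow_neg, zpow_natCast, inv_eq_one] at h; exact h
  have hsw : ∀ k (hk : k + 1 < n),
      sw n k = Equiv.swap ⟨k, Nat.lt_of_succ_lt hk⟩ ⟨k + 1, hk⟩ := by
    intro k hk
    simp [sw, hk]
  refine main_generic (v := v) RatFunc.X (algebraMap ℂ (RatFunc ℂ) q₀) hv1 (hv2 _ hq₀) ?_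
    (fun k => W (sw n k)) T Ti ?_ ?_ hTi piInv ?_ Y' Y'i ?_ hY'inv D' hD' e' he' d
  · intro z hz
    rw [← map_zpow₀, ← map_one (algebraMap ℂ (RatFunc ℂ)), ← map_sub]
    exact hv2 _ (sub_ne_zero.mpr (hqz z hz))
  · intro k _
    apply IsMon.of_mono
    intro a r
    rw [hW, one_mul]
    rfl
  · intro k hk p
    simp only [hsw k hk]
    exact hT k hk p
  · apply IsMon.of_mono
    intro a r
    rw [hpiInv, mono, AddMonoidAlgebra.smul_single]
    rfl
  · intro i
    rw [hY', hY]
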